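/- arXiv:1707.07868 — 6 statements merged into one kernel-verified Lean document; each statement's English description precedes it below -/
import Mathlib

section
/- For all complex numbers a, b, c, d, x, y, z with ad − bc = 1 and a + bz ≠ 0, the cubic function f(x, y, z) = (xz − y)³ satisfies the SL₂-invariance functional equation f(x, y, z) = (a + bz)³ · f(ax + by, cx + dy, (c + dz)/(a + bz)); that is, (xz − y)³ = (a + bz)³ · ((ax + by)·((c + dz)/(a + bz)) − (cx + dy))³. -/
/-!
The quantity `x * z - y` is the determinant of the position `(x, y)` and the tangent vector
`(1, z)`. A linear map multiplies determinants by its own determinant, and it sends `(1, z)` to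
`(a + b * z, c + d * z)`, which is `a + b * z` times the tangent vector with the induced slope.
-/

theorem det_linear_image_pair {R : Type*} [CommRing R] (a b c d x y u v : R) :
    (a * x + b * y) * (c * u + d * v) - (a * u + b * v) * (c * x + d * y) =
      (a * d - b * c) * (x * v - u * y) := by
  simpa only [Matrix.mul_fin_two, Matrix.det_fin_two_of] using
    Matrix.det_mul !![a, b; c, d] !![x, u; y, v]

theorem mul_det_linear_image_slope {K : Type*} [Field K] (a b c d x y z : K)
    (hz : a + b * z ≠ 0) :
    (a + b * z) * ((a * x + b * y) * ((c + d * z) / (a + b * z)) - (c * x + d * y)) =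
      (a * d - b * c) * (x * z - y) := by
  calc
    _ = (a * x + b * y) * (c + d * z) - (a + b * z) * (c * x + d * y) := by
      rw [mul_sub, mul_left_comm, mul_div_cancel₀ _ hz]
    _ = (a * d - b * c) * (x * z - y) := by
      simpa only [mul_one, one_mul] using det_linear_image_pair a b c d x y 1 z

theorem sl2_invariance_cubic_general {K : Type*} [Field K] (n : ℕ) (a b c d x y z : K)
    (hz : a + b * z ≠ 0) :
    (a * d - b * c) ^ n * (x * z - y) ^ n =
      (a + b * z) ^ n *
        ((a * x + b * y) * ((c + d * z) / (a + b * z)) - (c * x + d * y)) ^ n := by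
  rw [← mul_pow, ← mul_pow, mul_det_linear_image_slope a b c d x y z hz]

/-- SL₂-invariance of the cubic `f(x,y,z) = (xz − y)³`: for `ad − bc = 1` and
`a + bz ≠ 0`, one has
`(xz − y)³ = (a + bz)³ · ((ax + by)·((c + dz)/(a + bz)) − (cx + dy))³`. -/
theorem sl2_invariance_cubic (a b c d x y z : ℂ)
    (hdet : a * d - b * c = 1) (hz : a + b * z ≠ 0) :
    (x * z - y) ^ 3 =
      (a + b * z) ^ 3 *
        ((a * x + b * y) * ((c + d * z) / (a + b * z)) - (c * x + d * y)) ^ 3 := by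
  simpa only [hdet, one_pow, one_mul] using sl2_invariance_cubic_general 3 a b c d x y z hz
end

section
/- Let U ⊆ ℂ² be a connected open neighborhood of the origin and A, B, C, D holomorphic functions on U; set f(x, y, z) = A(x,y) + B(x,y)z + C(x,y)z² + D(x,y)z³. Suppose that for every a, b, c, d ∈ ℂ with ad − bc = 1, every (x, y) ∈ U with (ax + by, cx + dy) ∈ U, and every z ∈ ℂ with a + bz ≠ 0, one has f(x, y, z) = (a + bz)³ · f(ax + by, cx + dy, (c + dz)/(a + bz)). Then there exists λ ∈ ℂ such that f(x, y, z) = λ(xz − y)³ on U × ℂ, i.e. A(x,y) = −λy³, B(x,y) = 3λxy², C(x,y) = −3λx²y and D(x,y) = λx³ for all (x, y) ∈ U. -/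
/-!
An element of `SL₂(K)` moves a point together with a vector `v = (1, z)` attached to it. A pair
`(p, v)` can be moved to `(q, w)` as soon as `det (p, v) = det (q, w) ≠ 0`, so an invariant function
that is homogeneous of degree `n` in `v` is a constant multiple of `det (p, v) ^ n = (xz - y) ^ n`
wherever the determinant does not vanish. At a point `p ≠ 0` this excludes at most one slope, which
a polynomial in `z` does not notice. At the origin, stretching `v` by a factor `s` with `s ^ n ≠ 1`
forces the value to be `0`.
-/

open Polynomial

variable {K : Type*} [Field K]

/-- Invariance of a function `f(p, z)` of a point `p ∈ U` and a slope `z` under the linear action of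
`SL₂(K)`, where `f` is read as the restriction to the vectors `(1, z)` of a function homogeneous of
degree `n`. Only group elements that keep the point in `U` and the slope finite are considered.
Projective structures `y'' = f((x, y), y')` are the case `n = 3`. -/
def IsSL2Invariant (n : ℕ) (U : Set (K × K)) (f : K × K → K → K) : Prop :=
  ∀ a b c d : K, a * d - b * c = 1 →
    ∀ p : K × K, p ∈ U → (a * p.1 + b * p.2, c * p.1 + d * p.2) ∈ U →
    ∀ z : K, a + b * z ≠ 0 →
      f p z = (a + b * z) ^ n *
        f (a * p.1 + b * p.2, c * p.1 + d * p.2) ((c + d * z) / (a + b * z))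

/-- The determinant of the pair of vectors `p` and `(1, z)`, which is the basic invariant
`x y' - y` of a point and a slope. -/
def slopeDet (p : K × K) (z : K) : K :=
  p.1 * z - p.2

theorem exists_sl2_map_point_slope {p q : K × K} {z w : K}
    (hp : slopeDet p z ≠ 0) (hq : slopeDet q w ≠ 0) :
    ∃ a b c d : K, a * d - b * c = 1 ∧ (a * p.1 + b * p.2, c * p.1 + d * p.2) = q ∧
      a + b * z = slopeDet p z / slopeDet q w ∧
      c + d * z = slopeDet p z / slopeDet q w * w := by
  -- The matrix with columns `q`, `s • (1, w)` times the inverse of that with columns `p`, `(1, z)`.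
  set s := slopeDet p z / slopeDet q w
  have hsq : s * slopeDet q w = slopeDet p z := div_mul_cancel₀ _ hq
  refine ⟨(q.1 * z - s * p.2) / slopeDet p z, (s * p.1 - q.1) / slopeDet p z,
    (q.2 * z - s * w * p.2) / slopeDet p z, (s * w * p.1 - q.2) / slopeDet p z,
    ?_, Prod.ext ?_ ?_, ?_, ?_⟩ <;> field_simp <;> simp only [slopeDet] at hsq ⊢
  · linear_combination (p.1 * z - p.2) * hsq
  all_goals ring

theorem exists_ne_zero_pow_ne_one (R : Type*) [CommRing R] [IsDomain R] [Infinite R] {n : ℕ}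
    (hn : n ≠ 0) : ∃ s : R, s ≠ 0 ∧ s ^ n ≠ 1 := by
  classical
  obtain ⟨s, hs⟩ := Infinite.exists_notMem_finset (insert 0 (nthRootsFinset n (1 : R)))
  rw [Finset.mem_insert, mem_nthRootsFinset hn.pos, not_or] at hs
  exact ⟨s, hs⟩

namespace IsSL2Invariant

variable {n : ℕ} {U : Set (K × K)} {f : K × K → K → K}

theorem apply_eq_slopeDet_div_pow_mul (hf : IsSL2Invariant n U f) {p q : K × K} (hpU : p ∈ U)
    (hqU : q ∈ U) {z w : K} (hp : slopeDet p z ≠ 0) (hq : slopeDet q w ≠ 0) :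
    f p z = (slopeDet p z / slopeDet q w) ^ n * f q w := by
  obtain ⟨a, b, c, d, hdet, hpq, hfst, hsnd⟩ := exists_sl2_map_point_slope hp hq
  have hs : slopeDet p z / slopeDet q w ≠ 0 := div_ne_zero hp hq
  have h := hf a b c d hdet p hpU (hpq ▸ hqU) z (hfst ▸ hs)
  rwa [hpq, hfst, hsnd, mul_div_cancel_left₀ _ hs] at h

theorem exists_eq_mul_slopeDet_pow (hf : IsSL2Invariant n U f) :
    ∃ lam : K, ∀ p ∈ U, ∀ z, slopeDet p z ≠ 0 → f p z = lam * slopeDet p z ^ n := by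
  by_cases hbase : ∃ q ∈ U, ∃ w, slopeDet q w ≠ 0
  · obtain ⟨q, hqU, w, hq⟩ := hbase
    refine ⟨f q w / slopeDet q w ^ n, fun p hpU z hp ↦ ?_⟩
    rw [hf.apply_eq_slopeDet_div_pow_mul hpU hqU hp hq, div_pow]
    ring
  · push Not at hbase
    exact ⟨0, fun p hpU z hp ↦ absurd (hbase p hpU z) hp⟩

theorem apply_zero_eq_zero (hf : IsSL2Invariant n U f) (h0 : 0 ∈ U) {s : K} (hs0 : s ≠ 0)
    (hsn : s ^ n ≠ 1) (z : K) : f 0 z = 0 := by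
  -- The matrix of determinant `1` used here has `(1, z)` as an eigenvector with eigenvalue `s`.
  have hslope : (z * (s - s⁻¹) + s⁻¹ * z) / s = z := by
    rw [div_eq_iff hs0]
    ring
  have h := hf s 0 (z * (s - s⁻¹)) s⁻¹ (by simp [hs0]) 0 h0
    (by simpa [Prod.mk_zero_zero] using h0) z (by simpa)
  have hscale : f 0 z = s ^ n * f 0 z := by simpa [hslope, Prod.mk_zero_zero] using h
  by_contra hne
  exact hsn ((right_eq_mul₀ hne).mp hscale)

theorem exists_eq_C_mul_pow [Infinite K] {P : K × K → K[X]}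
    (hP : IsSL2Invariant n U fun p z ↦ (P p).eval z) (hn : n ≠ 0) :
    ∃ lam : K, ∀ p ∈ U, P p = C lam * (C p.1 * X - C p.2) ^ n := by
  obtain ⟨lam, hlam⟩ := hP.exists_eq_mul_slopeDet_pow
  refine ⟨lam, fun p hpU ↦ ?_⟩
  rcases eq_or_ne p 0 with rfl | hp
  · obtain ⟨s, hs0, hsn⟩ := exists_ne_zero_pow_ne_one K hn
    exact Polynomial.funext fun z ↦ by simpa [hn] using hP.apply_zero_eq_zero hpU hs0 hsn z
  have hline : C p.1 * X - C p.2 ≠ 0 := fun h ↦ hp <| Prod.ext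
    (by simpa using congrArg (coeff · 1) h) (by simpa using congrArg (coeff · 0) h)
  -- Multiplying by the linear factor removes the condition that it does not vanish.
  refine mul_right_cancel₀ hline (Polynomial.funext fun z ↦ ?_)
  have heval : (C p.1 * X - C p.2).eval z = slopeDet p z := by simp [slopeDet]
  simp only [eval_mul, eval_pow, eval_C, heval]
  rcases eq_or_ne (slopeDet p z) 0 with hz | hz
  · simp only [hz, mul_zero]
  · rw [hlam p hpU z hz]

end IsSL2Invariant

theorem sl2_invariant_projective_structure_unique_general [Infinite K]
    (U : Set (K × K)) (A B C D : K × K → K)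
    (hinv : IsSL2Invariant 3 U fun p z ↦ A p + B p * z + C p * z ^ 2 + D p * z ^ 3) :
    ∃ lam : K, ∀ p ∈ U,
      A p = -lam * p.2 ^ 3 ∧
      B p = 3 * lam * p.1 * p.2 ^ 2 ∧
      C p = -3 * lam * p.1 ^ 2 * p.2 ∧
      D p = lam * p.1 ^ 3 := by
  let F (p : K × K) : Cubic K := ⟨D p, C p, B p, A p⟩
  have hF : IsSL2Invariant 3 U fun p z ↦ (F p).toPoly.eval z := by
    convert hinv using 3 with p z
    simp only [F, Cubic.toPoly, eval_add, eval_mul, eval_pow, eval_C, eval_X]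
    ring
  obtain ⟨lam, hlam⟩ := hF.exists_eq_C_mul_pow three_ne_zero
  refine ⟨lam, fun p hpU ↦ ?_⟩
  let G : Cubic K :=
    ⟨lam * p.1 ^ 3, -3 * lam * p.1 ^ 2 * p.2, 3 * lam * p.1 * p.2 ^ 2, -lam * p.2 ^ 3⟩
  have hG : G.toPoly = Polynomial.C lam * (Polynomial.C p.1 * X - Polynomial.C p.2) ^ 3 := by
    simp only [G, Cubic.toPoly, map_mul, map_neg, map_pow, map_ofNat]
    ring
  have hFG : F p = G := (Cubic.toPoly_injective _ _).mp ((hlam p hpU).trans hG.symm)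
  exact ⟨congrArg Cubic.d hFG, congrArg Cubic.c hFG, congrArg Cubic.b hFG, congrArg Cubic.a hFG⟩

/-- The unique projective structure on a connected open neighborhood of the
origin in ℂ² invariant by the linear SL₂(ℂ)-action is `y'' = λ(xy' − y)³` for
some `λ ∈ ℂ`: if `f(x,y,z) = A + Bz + Cz² + Dz³` (with `A,B,C,D` holomorphic
on `U`) satisfies the invariance equation
`f(x,y,z) = (a+bz)³ f(ax+by, cx+dy, (c+dz)/(a+bz))` for all `ad − bc = 1`,
then `A = −λy³`, `B = 3λxy²`, `C = −3λx²y`, `D = λx³` on `U`. -/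
theorem sl2_invariant_projective_structure_unique
    (U : Set (ℂ × ℂ)) (hU : IsOpen U) (hconn : IsConnected U)
    (h0 : (0, 0) ∈ U)
    (A B C D : ℂ × ℂ → ℂ)
    (hA : DifferentiableOn ℂ A U) (hB : DifferentiableOn ℂ B U)
    (hC : DifferentiableOn ℂ C U) (hD : DifferentiableOn ℂ D U)
    (hinv : ∀ a b c d : ℂ, a * d - b * c = 1 →
      ∀ p : ℂ × ℂ, p ∈ U → (a * p.1 + b * p.2, c * p.1 + d * p.2) ∈ U →
      ∀ z : ℂ, a + b * z ≠ 0 →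
        A p + B p * z + C p * z ^ 2 + D p * z ^ 3 =
          (a + b * z) ^ 3 *
            (A (a * p.1 + b * p.2, c * p.1 + d * p.2)
              + B (a * p.1 + b * p.2, c * p.1 + d * p.2) * ((c + d * z) / (a + b * z))
              + C (a * p.1 + b * p.2, c * p.1 + d * p.2) * ((c + d * z) / (a + b * z)) ^ 2
              + D (a * p.1 + b * p.2, c * p.1 + d * p.2) * ((c + d * z) / (a + b * z)) ^ 3)) :
    ∃ lam : ℂ, ∀ p ∈ U,
      A p = -lam * p.2 ^ 3 ∧
      B p = 3 * lam * p.1 * p.2 ^ 2 ∧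
      C p = -3 * lam * p.1 ^ 2 * p.2 ∧
      D p = lam * p.1 ^ 3 :=
  sl2_invariant_projective_structure_unique_general U A B C D hinv
end

section
/- Let x, y, f, p, q ∈ ℂ with y ≠ 0, and let i ∈ ℂ satisfy i² = −1. If y·p + f² = 0, 2f + x·p − y·q = 0, and (x·f − y)³ = p + f·q, then (x·f − y) · ((xy + i)·f − y²) · ((xy − i)·f − y²) = 0. -/
/-!
The invariance equations express `y²p` and `y²q` as polynomials in `x`, `y`, `f`. Multiplied by
`y²`, the geodesic equation thus reads `(xf - y) * ((y(xf - y))² + f²) = 0`, and a square root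
of `-1` splits the sum of squares into two linear factors in `f`.
-/

section CommRing

variable {R : Type*} [CommRing R] {x y f p q i : R}

theorem sq_add_sq_eq_mul_of_sq_eq_neg_one (hi : i ^ 2 = -1) (a b : R) :
    a ^ 2 + b ^ 2 = (a + i * b) * (a - i * b) := by
  linear_combination b ^ 2 * hi

theorem sq_mul_y_deriv_of_borel_invariant (h1 : y * p + f ^ 2 = 0)
    (h2 : 2 * f + x * p - y * q = 0) : y ^ 2 * q = f * (2 * y - x * f) := by
  linear_combination x * h1 - y * h2

theorem sq_mul_geodesic_accel_of_borel_invariant (h1 : y * p + f ^ 2 = 0)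
    (h2 : 2 * f + x * p - y * q = 0) :
    y ^ 2 * (p + f * q) = -((x * f - y) * f ^ 2) :=
  calc y ^ 2 * (p + f * q) = y * (y * p) + f * (y ^ 2 * q) := by ring
    _ = y * -f ^ 2 + f * (f * (2 * y - x * f)) := by
      rw [eq_neg_of_add_eq_zero_left h1, sq_mul_y_deriv_of_borel_invariant h1 h2]
    _ = -((x * f - y) * f ^ 2) := by ring

theorem mul_sq_add_sq_eq_zero_of_borel_invariant_geodesic (h1 : y * p + f ^ 2 = 0)
    (h2 : 2 * f + x * p - y * q = 0) (h3 : (x * f - y) ^ 3 = p + f * q) :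
    (x * f - y) * ((y * (x * f - y)) ^ 2 + f ^ 2) = 0 :=
  calc (x * f - y) * ((y * (x * f - y)) ^ 2 + f ^ 2)
      = y ^ 2 * (x * f - y) ^ 3 + (x * f - y) * f ^ 2 := by ring
    _ = 0 := by rw [h3, sq_mul_geodesic_accel_of_borel_invariant h1 h2, neg_add_cancel]

theorem borel_invariant_slope_elimination_general (hi : i ^ 2 = -1)
    (h1 : y * p + f ^ 2 = 0) (h2 : 2 * f + x * p - y * q = 0)
    (h3 : (x * f - y) ^ 3 = p + f * q) :
    (x * f - y) * ((x * y + i) * f - y ^ 2) * ((x * y - i) * f - y ^ 2) = 0 :=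
  calc (x * f - y) * ((x * y + i) * f - y ^ 2) * ((x * y - i) * f - y ^ 2)
      = (x * f - y) * ((y * (x * f - y) + i * f) * (y * (x * f - y) - i * f)) := by ring
    _ = (x * f - y) * ((y * (x * f - y)) ^ 2 + f ^ 2) := by
      rw [sq_add_sq_eq_mul_of_sq_eq_neg_one hi]
    _ = 0 := mul_sq_add_sq_eq_zero_of_borel_invariant_geodesic h1 h2 h3

end CommRing

/-- Elimination of the derivatives in the Borel-invariance and geodesic
equations for `y'' = (xy' − y)³`: if `y ≠ 0`, `i² = −1`, `yp + f² = 0`,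
`2f + xp − yq = 0` and `(xf − y)³ = p + fq`, then
`(xf − y)·((xy + i)f − y²)·((xy − i)f − y²) = 0`. -/
theorem borel_invariant_slope_elimination (x y f p q i : ℂ)
    (hy : y ≠ 0) (hi : i ^ 2 = -1)
    (h1 : y * p + f ^ 2 = 0)
    (h2 : 2 * f + x * p - y * q = 0)
    (h3 : (x * f - y) ^ 3 = p + f * q) :
    (x * f - y) * ((x * y + i) * f - y ^ 2) * ((x * y - i) * f - y ^ 2) = 0 :=
  borel_invariant_slope_elimination_general hi h1 h2 h3
end

section
/- Let γ ∈ ℂ, and set α = γ(2γ² − 1), β = 2 − 3γ². For every z ∈ ℂ, the slope field g(x, y) = (eˣ(γy + (2γ² − 1)eˣ) − zγeˣ) / (y + 2γeˣ − z), defined where y + 2γeˣ − z ≠ 0, satisfies ∂g/∂x + g·∂g/∂y = αeˣ + βg + e^{−2x}g³ at every point of its domain; moreover the slope field g_∞(x, y) = γeˣ (corresponding to z = ∞) satisfies the same equation. Hence the pencil of foliations ω_z = [eˣ(γy + (2γ² − 1)eˣ)dx − (y + 2γeˣ)dy] + z[dy − γeˣdx], z ∈ ℙ¹, is a pencil of geodesic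 foliations for the projective structure y'' = αeˣ + βy' + e^{−2x}(y')³. -/
open Complex

/-- The slope field of the pencil `ω_z` for the flat projective structure
`y'' = αeˣ + βy' + e^{−2x}(y')³` with `α = γ(2γ² − 1)`, `β = 2 − 3γ²`. -/
noncomputable def pencilSlope (γ z x y : ℂ) : ℂ :=
  (Complex.exp x * (γ * y + (2 * γ ^ 2 - 1) * Complex.exp x) - z * γ * Complex.exp x) /
    (y + 2 * γ * Complex.exp x - z)

/-!
Write a slope field as `g = p eˣ`. The equation `∂g/∂x + g ∂g/∂y = αeˣ + βg + e^{−2x}g³` then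
becomes `∂p/∂x + p eˣ ∂p/∂y = p³ + (β − 1)p + α`. For `α = γ(2γ² − 1)`, `β = 2 − 3γ²` the constant
`γ` is a root of the cubic, which gives the member `z = ∞`. The finite members correspond to
`p = γ − u` with `u = eˣ / (y + 2γeˣ − z)`, for which `∂u/∂x = u − 2γu²` and `eˣ ∂u/∂y = −u²`, so
that both sides of the reduced equation are polynomials in `u`.
-/

open scoped Topology

section Geodesic

variable {𝕜 : Type*} [NontriviallyNormedField 𝕜]

/-- The foliation with slope field `g` is geodesic at `(x, y)` for the second-order equation
`y'' = F(x, y, y')`: both partial derivatives of `g` exist there and `∂g/∂x + g ∂g/∂y = F(x, y, g)`.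
A projective structure is the case where `F` is a polynomial of degree at most three in `y'`. -/
def IsGeodesicAt (F : 𝕜 → 𝕜 → 𝕜 → 𝕜) (g : 𝕜 → 𝕜 → 𝕜) (x y : 𝕜) : Prop :=
  ∃ gx gy : 𝕜, HasDerivAt (fun x' => g x' y) gx x ∧ HasDerivAt (fun y' => g x y') gy y ∧
    gx + g x y * gy = F x y (g x y)

theorem IsGeodesicAt.congr_of_eventuallyEq {F : 𝕜 → 𝕜 → 𝕜 → 𝕜} {g g₁ : 𝕜 → 𝕜 → 𝕜} {x y : 𝕜}
    (hg : IsGeodesicAt F g x y) (h : ∀ᶠ q in 𝓝 (x, y), g₁ q.1 q.2 = g q.1 q.2) :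
    IsGeodesicAt F g₁ x y := by
  obtain ⟨gx, gy, hgx, hgy, heq⟩ := hg
  have heq_at : g₁ x y = g x y := h.self_of_nhds
  refine ⟨gx, gy, hgx.congr_of_eventuallyEq ?_, hgy.congr_of_eventuallyEq ?_, by rwa [heq_at]⟩
  · exact h.curry_nhds.mono fun _ hx => hx.self_of_nhds
  · exact h.curry_nhds.self_of_nhds

end Geodesic

/-- The right-hand side of the equation `y'' = αeˣ + βy' + e^{−2x}(y')³`, with `s` in place
of `y'`. -/
noncomputable def expCubic (α β x _y s : ℂ) : ℂ :=
  α * exp x + β * s + exp (-2 * x) * s ^ 3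

theorem expCubic_mul_exp (α β x y p : ℂ) :
    expCubic α β x y (p * exp x) = (p ^ 3 + β * p + α) * exp x := by
  have hexp : exp (-2 * x) * exp x ^ 2 = 1 := by
    rw [← exp_nat_mul, ← exp_add, Nat.cast_ofNat, neg_mul, neg_add_cancel, exp_zero]
  unfold expCubic
  linear_combination p ^ 3 * exp x * hexp

theorem isGeodesicAt_mul_exp {α β x y px py : ℂ} {p : ℂ → ℂ → ℂ}
    (hpx : HasDerivAt (fun x' => p x' y) px x) (hpy : HasDerivAt (fun y' => p x y') py y)
    (h : px + p x y * exp x * py = p x y ^ 3 + (β - 1) * p x y + α) :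
    IsGeodesicAt (expCubic α β) (fun x y => p x y * exp x) x y := by
  refine ⟨_, _, hpx.mul (hasDerivAt_exp x), hpy.mul_const (exp x), ?_⟩
  rw [expCubic_mul_exp]
  linear_combination exp x * h

theorem isGeodesicAt_const_mul_exp (γ x y : ℂ) :
    IsGeodesicAt (expCubic (γ * (2 * γ ^ 2 - 1)) (2 - 3 * γ ^ 2)) (fun x _ => γ * exp x) x y :=
  isGeodesicAt_mul_exp (p := fun _ _ => γ) (hasDerivAt_const x γ) (hasDerivAt_const y γ) (by ring)

/-- The function `u = eˣ / (y + 2γeˣ − z)`, in terms of which the slope field of the member `z` of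
the pencil is `(γ − u)eˣ`. It takes the junk value `0` where `y + 2γeˣ − z = 0`. -/
noncomputable def pencilRatio (γ z x y : ℂ) : ℂ :=
  exp x / (y + 2 * γ * exp x - z)

section Pencil

variable {γ z x y : ℂ}

theorem pencilSlope_eq_mul_exp (h : y + 2 * γ * exp x - z ≠ 0) :
    pencilSlope γ z x y = (γ - pencilRatio γ z x y) * exp x := by
  unfold pencilSlope pencilRatio
  rw [sub_div' h, div_mul_eq_mul_div]
  ring

theorem eventually_pencilSlope_eq_mul_exp (h : y + 2 * γ * exp x - z ≠ 0) :
    ∀ᶠ q : ℂ × ℂ in 𝓝 (x, y),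
      pencilSlope γ z q.1 q.2 = (γ - pencilRatio γ z q.1 q.2) * exp q.1 := by
  have hcont : Continuous fun q : ℂ × ℂ => q.2 + 2 * γ * exp q.1 - z := by fun_prop
  exact (hcont.continuousAt.eventually_ne h).mono fun _ => pencilSlope_eq_mul_exp

theorem hasDerivAt_pencilRatio_fst (h : y + 2 * γ * exp x - z ≠ 0) :
    HasDerivAt (fun x' => pencilRatio γ z x' y)
      (pencilRatio γ z x y - 2 * γ * pencilRatio γ z x y ^ 2) x := by
  have hden : HasDerivAt (fun x' => y + 2 * γ * exp x' - z) (2 * γ * exp x) x :=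
    (((hasDerivAt_exp x).const_mul (2 * γ)).const_add y).sub_const z
  refine ((hasDerivAt_exp x).fun_div hden h).congr_deriv ?_
  unfold pencilRatio
  field_simp

theorem hasDerivAt_pencilRatio_snd (h : y + 2 * γ * exp x - z ≠ 0) :
    HasDerivAt (fun y' => pencilRatio γ z x y') (-(pencilRatio γ z x y ^ 2 / exp x)) y := by
  have hden : HasDerivAt (fun y' => y' + 2 * γ * exp x - z) 1 y :=
    ((hasDerivAt_id' y).add_const _).sub_const z
  refine ((hasDerivAt_const y (exp x)).fun_div hden h).congr_deriv ?_
  unfold pencilRatio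
  field_simp
  ring

theorem isGeodesicAt_pencilSlope (h : y + 2 * γ * exp x - z ≠ 0) :
    IsGeodesicAt (expCubic (γ * (2 * γ ^ 2 - 1)) (2 - 3 * γ ^ 2)) (pencilSlope γ z) x y := by
  have hgeodesic : IsGeodesicAt (expCubic (γ * (2 * γ ^ 2 - 1)) (2 - 3 * γ ^ 2))
      (fun x y => (γ - pencilRatio γ z x y) * exp x) x y := by
    refine isGeodesicAt_mul_exp (p := fun x y => γ - pencilRatio γ z x y)
      ((hasDerivAt_pencilRatio_fst h).const_sub γ) ((hasDerivAt_pencilRatio_snd h).const_sub γ) ?_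
    field_simp
    ring
  exact hgeodesic.congr_of_eventuallyEq (eventually_pencilSlope_eq_mul_exp h)

end Pencil

/-- For `α = γ(2γ² − 1)` and `β = 2 − 3γ²`, each member of the pencil
`ω_z = [eˣ(γy + (2γ²−1)eˣ)dx − (y + 2γeˣ)dy] + z[dy − γeˣdx]` is geodesic for
`y'' = αeˣ + βy' + e^{−2x}(y')³`: the slope field
`g(x,y) = (eˣ(γy + (2γ²−1)eˣ) − zγeˣ)/(y + 2γeˣ − z)` satisfies
`∂g/∂x + g∂g/∂y = αeˣ + βg + e^{−2x}g³` on its domain, and so does the slope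
field `g_∞(x,y) = γeˣ` corresponding to `z = ∞`. -/
theorem flat_pencil_geodesic (γ : ℂ) :
    (∀ z x y : ℂ, y + 2 * γ * Complex.exp x - z ≠ 0 →
      ∃ gx gy : ℂ,
        HasDerivAt (fun x' : ℂ => pencilSlope γ z x' y) gx x ∧
        HasDerivAt (fun y' : ℂ => pencilSlope γ z x y') gy y ∧
        gx + pencilSlope γ z x y * gy =
          γ * (2 * γ ^ 2 - 1) * Complex.exp x
            + (2 - 3 * γ ^ 2) * pencilSlope γ z x y
            + Complex.exp (-2 * x) * (pencilSlope γ z x y) ^ 3) ∧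
    (∀ x y : ℂ,
      ∃ gx gy : ℂ,
        HasDerivAt (fun x' : ℂ => γ * Complex.exp x') gx x ∧
        HasDerivAt (fun _ : ℂ => γ * Complex.exp x) gy y ∧
        gx + (γ * Complex.exp x) * gy =
          γ * (2 * γ ^ 2 - 1) * Complex.exp x
            + (2 - 3 * γ ^ 2) * (γ * Complex.exp x)
            + Complex.exp (-2 * x) * (γ * Complex.exp x) ^ 3) :=
  ⟨fun _ _ _ => isGeodesicAt_pencilSlope, isGeodesicAt_const_mul_exp γ⟩
end

section
/- Let z ∈ ℂ. The slope field g(x) = eˣ·(x/2 − 1 + z/2) / (x + z), defined (independently of y) where x + z ≠ 0, satisfies dg/dx = (1/4)·eˣ + e^{−x}·g² at every point of its domain. Hence the pencil of foliations ω_z = (1 − x/2)eˣdx + x·dy + z(dy − (1/2)eˣdx), z ∈ ℙ¹, is a pencil of geodesic foliations for the projective structure y'' = (1/4)eˣ + e^{−x}(y')². -/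
/-!
Writing `g = eˣ h` turns `g' = eˣ/4 + e⁻ˣ g²` into the autonomous equation `h' = (h - 1/2)²`.
Its solutions are the constant `1/2`, which is the member `z = ∞` of the pencil, and the translates
`1/2 - 1/(x + z)`, which give the slope fields with `z` finite.
-/

section Riccati

variable {𝕜 : Type*} [NontriviallyNormedField 𝕜]

theorem hasDerivAt_const_sub_inv_add_const (a z : 𝕜) {x : 𝕜} (hx : x + z ≠ 0) :
    HasDerivAt (fun t => a - (t + z)⁻¹) ((a - (x + z)⁻¹ - a) ^ 2) x := by
  refine ((((hasDerivAt_id x).add_const z).fun_inv hx).const_sub a).congr_deriv ?_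
  simp only [id_eq]
  field_simp
  ring

-- The linear term `2 a E h` of `(E h)'` cancels the cross term of `E (h - a)²`.
theorem hasDerivAt_mul_of_hasDerivAt_sub_sq {E h : 𝕜 → 𝕜} {a x : 𝕜} (hEx : E x ≠ 0)
    (hE : HasDerivAt E (2 * a * E x) x) (hh : HasDerivAt h ((h x - a) ^ 2) x) :
    HasDerivAt (fun t => E t * h t) (a ^ 2 * E x + (E x)⁻¹ * (E x * h x) ^ 2) x := by
  refine (hE.fun_mul hh).congr_deriv ?_
  field_simp
  ring

end Riccati

theorem exp_mul_div_eq_exp_mul_half_sub_inv {x z : ℂ} (hx : x + z ≠ 0) :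
    Complex.exp x * (x / 2 - 1 + z / 2) / (x + z) =
      Complex.exp x * (1 / 2 - (x + z)⁻¹) := by
  field_simp
  ring

/-- The slope field `g(x) = eˣ(x/2 − 1 + z/2)/(x + z)` satisfies
`dg/dx = (1/4)eˣ + e^{−x}g²` wherever `x + z ≠ 0`: the pencil
`ω_z = (1 − x/2)eˣdx + x dy + z(dy − (1/2)eˣdx)` is geodesic for the
projective structure `y'' = (1/4)eˣ + e^{−x}(y')²`. -/
theorem flat_pencil_geodesic_iib2 (z : ℂ) :
    ∀ x : ℂ, x + z ≠ 0 →
      HasDerivAt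
        (fun x' : ℂ => Complex.exp x' * (x' / 2 - 1 + z / 2) / (x' + z))
        ((1 / 4) * Complex.exp x
          + Complex.exp (-x) *
            (Complex.exp x * (x / 2 - 1 + z / 2) / (x + z)) ^ 2) x := by
  intro x hx
  have slope_eq : (fun t : ℂ => Complex.exp t * (t / 2 - 1 + z / 2) / (t + z)) =ᶠ[nhds x]
      fun t => Complex.exp t * (1 / 2 - (t + z)⁻¹) := by
    filter_upwards [(continuous_add_const z).continuousAt.eventually_ne hx] with t ht
    exact exp_mul_div_eq_exp_mul_half_sub_inv ht
  have hasDerivAt_exp : HasDerivAt Complex.exp (2 * (1 / 2) * Complex.exp x) x :=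
    (Complex.hasDerivAt_exp x).congr_deriv (by ring)
  have riccati := hasDerivAt_mul_of_hasDerivAt_sub_sq (Complex.exp_ne_zero x) hasDerivAt_exp
    (hasDerivAt_const_sub_inv_add_const (1 / 2) z hx)
  refine (riccati.congr_of_eventuallyEq slope_eq).congr_deriv ?_
  rw [exp_mul_div_eq_exp_mul_half_sub_inv hx, Complex.exp_neg]
  norm_num
end

section
/- Let u be a holomorphic, nowhere-vanishing function on an open set U ⊆ ℂ², and let t ∈ ℂ*. Then the slope field s(x, y) = −1/(t·u(x, y)) satisfies ∂s/∂x + s·∂s/∂y = −(u_x/u)·s − (u_y/u)·s² at every point of U, where u_x = ∂u/∂x and u_y = ∂u/∂y. Hence every member F_t of the pencil of foliations generated by ω₀ = dx and ω_∞ = u(x,y)dy is geodesic for the projective structure y'' + (u_x/u)·y' + (u_y/u)·(y')² = 0. -/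
section

variable {𝕜 : Type*} [NontriviallyNormedField 𝕜]

/-- The constants `a` and `t` cancel in the logarithmic derivative of `a / (t * f)`, which is
why a single projective structure serves all members of the pencil. -/
theorem hasDerivAt_const_div_const_mul {𝕜' : Type*} [NontriviallyNormedField 𝕜']
    [NormedAlgebra 𝕜 𝕜'] {f : 𝕜 → 𝕜'} {f' : 𝕜'} {x : 𝕜} (a : 𝕜') {t : 𝕜'} (ht : t ≠ 0)
    (hf : HasDerivAt f f' x) (hfx : f x ≠ 0) :
    HasDerivAt (fun z => a / (t * f z)) (-(f' / f x) * (a / (t * f x))) x := by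
  have quotient_rule :=
    (hasDerivAt_const x a).fun_div (hf.const_mul t) (mul_ne_zero ht hfx)
  refine quotient_rule.congr_deriv ?_
  field_simp
  ring

theorem pencil_member_geodesic_general {u : 𝕜 × 𝕜 → 𝕜} {ux uy : 𝕜} {p : 𝕜 × 𝕜}
    (hup : u p ≠ 0)
    (hux : HasDerivAt (fun x => u (x, p.2)) ux p.1)
    (huy : HasDerivAt (fun y => u (p.1, y)) uy p.2)
    {t : 𝕜} (ht : t ≠ 0) :
    ∃ sx sy : 𝕜,
      HasDerivAt (fun x => -1 / (t * u (x, p.2))) sx p.1 ∧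
      HasDerivAt (fun y => -1 / (t * u (p.1, y))) sy p.2 ∧
      sx + (-1 / (t * u p)) * sy =
        -(ux / u p) * (-1 / (t * u p)) - (uy / u p) * (-1 / (t * u p)) ^ 2 := by
  have hsx := hasDerivAt_const_div_const_mul (-1) ht hux hup
  have hsy := hasDerivAt_const_div_const_mul (-1) ht huy hup
  exact ⟨_, _, hsx, hsy, by ring⟩

end

/-- Let `u` be holomorphic and nowhere vanishing on an open set `U ⊆ ℂ²`,
with partial derivatives `u_x`, `u_y`, and let `t ∈ ℂ*`. The slope field
`s(x,y) = −1/(t·u(x,y))` satisfies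
`∂s/∂x + s∂s/∂y = −(u_x/u)s − (u_y/u)s²` at every point of `U`: every member
of the pencil generated by `ω₀ = dx`, `ω_∞ = u dy` is geodesic for
`y'' + (u_x/u)y' + (u_y/u)(y')² = 0`. -/
theorem pencil_member_geodesic (U : Set (ℂ × ℂ)) (hU : IsOpen U)
    (u ux uy : ℂ × ℂ → ℂ)
    (hu : DifferentiableOn ℂ u U)
    (hune : ∀ p ∈ U, u p ≠ 0)
    (hux : ∀ p ∈ U, HasDerivAt (fun x : ℂ => u (x, p.2)) (ux p) p.1)
    (huy : ∀ p ∈ U, HasDerivAt (fun y : ℂ => u (p.1, y)) (uy p) p.2)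
    (t : ℂ) (ht : t ≠ 0) :
    ∀ p ∈ U, ∃ sx sy : ℂ,
      HasDerivAt (fun x : ℂ => -1 / (t * u (x, p.2))) sx p.1 ∧
      HasDerivAt (fun y : ℂ => -1 / (t * u (p.1, y))) sy p.2 ∧
      sx + (-1 / (t * u p)) * sy =
        -(ux p / u p) * (-1 / (t * u p)) - (uy p / u p) * (-1 / (t * u p)) ^ 2 :=
  fun p hp => pencil_member_geodesic_general (hune p hp) (hux p hp) (huy p hp) ht
end
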